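/- Let n ≥ 2, let μ = f·Lⁿ ∈ 𝒲(ℝⁿ) be a PS measure, let E ⊆ ℝⁿ be a Lebesgue-measurable set, let v ∈ S^{n−1}, and assume μ(E Δ H_μ(E, v)) > 0. Then there exists η ∈ S^{n−1} with v·η > 0 such that μ(S_η(E) ∖ H_μ(E, v)) < μ(E ∖ H_μ(E, v)); in particular, μ(S_η(E) Δ H_μ(E, v)) < μ(E Δ H_μ(E, v)). -/

import Mathlib

/-!
Let `H = H_μ(E, v)`. On every line in a direction `η` with `v·η > 0`, both `H` and `S_η(E)` are
half-lines pointing in the direction `η`, hence nested, and `S_η(E)` has the same line measure as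
`E`. Consequently `S_η(E) \ H` has at most the line measure of `E \ H`, and strictly less on the
lines which charge both `E \ H` and `H \ E`.

It remains to choose `η` so that many lines charge both sets. They have the same positive measure,
because `μ(H) = μ(E)`. Since `∫∫ a(x) b(x + z) dx dz = (∫ a) (∫ b)`, some translation by `z` carries
a positive portion of `E \ H` into `H \ E`. It moves points from outside `H` into `H`, so `v·z > 0`,
and `η = z / ‖z‖` works.

Fubini along `η` needs no splitting of the space as `η^⊥ × ℝ`: each line in the direction `η` spends
unit time in the slab `0 ≤ ⟪z, η⟫ < 1`, so integrating `∫ g(z + tη) dt` over the slab gives `∫ g`.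
-/

open MeasureTheory Set Filter
open scoped ENNReal RealInnerProductSpace Topology

noncomputable section

/-- Euclidean space ℝⁿ. -/
abbrev En (n : ℕ) := EuclideanSpace ℝ (Fin n)

/-- Divergence of a vector field on ℝⁿ. -/
noncomputable def dvg {n : ℕ} (φ : En n → En n) (x : En n) : ℝ :=
  ∑ i : Fin n, fderiv ℝ φ x (EuclideanSpace.single i 1) i

/-- `f'` is the (weak) gradient of `f`, and both are locally integrable;
this encodes `f ∈ W^{1,1}_loc(ℝⁿ)` with weak gradient `∇f = f'`. -/
def HasWeakGrad {n : ℕ} (f : En n → ℝ) (f' : En n → En n) : Prop :=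
  LocallyIntegrable f volume ∧ LocallyIntegrable f' volume ∧
    ∀ φ : En n → En n, ContDiff ℝ 1 φ → HasCompactSupport φ →
      (∫ x, f x * dvg φ x) = - ∫ x, ⟪φ x, f' x⟫

/-- Membership of `μ = f·Lⁿ` in the class `𝒲(ℝⁿ)`: the density `f` is non-negative,
integrable and lies in `W^{1,1}_loc(ℝⁿ)` with weak gradient `f'`. -/
def MemW {n : ℕ} (f : En n → ℝ) (f' : En n → En n) : Prop :=
  (∀ x, 0 ≤ f x) ∧ Integrable f volume ∧ HasWeakGrad f f'

/-- Admissible test vector fields: `C¹`, compactly supported in `U`, sup-norm at most 1. -/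
def IsTestField {n : ℕ} (U : Set (En n)) (φ : En n → En n) : Prop :=
  ContDiff ℝ 1 φ ∧ HasCompactSupport φ ∧ tsupport φ ⊆ U ∧ ∀ x, ‖φ x‖ ≤ 1

/-- The weighted variation `‖g‖_{BV_μ(U)}` (valued in `ℝ≥0∞`;
membership in `BV_μ(U)` means that this quantity is finite). -/
noncomputable def bvVar {n : ℕ} (f : En n → ℝ) (f' : En n → En n) (U : Set (En n))
    (g : En n → ℝ) : ℝ≥0∞ :=
  ⨆ (φ : En n → En n) (_ : IsTestField U φ),
    ENNReal.ofReal (∫ x in U, g x * (f x * dvg φ x + ⟪φ x, f' x⟫))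

/-- The weighted perimeter `Per_μ(E; U)`. -/
noncomputable def perim {n : ℕ} (f : En n → ℝ) (f' : En n → En n) (U : Set (En n))
    (E : Set (En n)) : ℝ≥0∞ :=
  bvVar f f' U (E.indicator fun _ => (1 : ℝ))

/-- The measure `μ = f·Lⁿ`. -/
noncomputable def muM {n : ℕ} (f : En n → ℝ) : Measure (En n) :=
  volume.withDensity fun x => ENNReal.ofReal (f x)

/-- One-dimensional generalized Ehrhard symmetrization of `A ⊆ ℝ` in direction `v ∈ {−1,+1}`
with respect to a measure `ν` on `ℝ`: the largest half-line `{t : v·t ≥ c}` of `ν`-measure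
`ν A` (with the conventions `∅`, `ℝ` when `c = ±∞`). -/
def ehrhard1D (ν : Measure ℝ) (v : ℝ) (A : Set ℝ) : Set ℝ :=
  {t | ∀ b : ℝ, (∀ c : ℝ, ν {y | c ≤ v * y} ≤ ν A → b ≤ c) → b ≤ v * t}

/-- The weighted measure `f·H¹` on the fiber `{x + t·v : t ∈ ℝ}`, identified with `ℝ`. -/
noncomputable def fiberMeasure {n : ℕ} (f : En n → ℝ) (x v : En n) : Measure ℝ :=
  (volume : Measure ℝ).withDensity fun t => ENNReal.ofReal (f (x + t • v))

/-- Generalized `v`-Ehrhard symmetrization of `E ⊆ ℝⁿ` with respect to `μ = f·Lⁿ`: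
on each fiber over `v^⊥` one replaces `E` by the largest half-line in direction `v`
of the same weighted measure. -/
def ehrhardSymm {n : ℕ} (f : En n → ℝ) (v : En n) (E : Set (En n)) : Set (En n) :=
  {z | ⟪z, v⟫ ∈
      ehrhard1D (fiberMeasure f (z - ⟪z, v⟫ • v) v) 1
        {t | (z - ⟪z, v⟫ • v) + t • v ∈ E}}

/-- `μ = f·Lⁿ` is a perimeter symmetrization (PS) measure: generalized Ehrhard
symmetrization does not increase the weighted perimeter of sets of finite `μ`-perimeter. -/
def IsPSMeasure {n : ℕ} (f : En n → ℝ) (f' : En n → En n) : Prop :=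
  ∀ v : En n, ‖v‖ = 1 → ∀ E : Set (En n), NullMeasurableSet E volume →
    perim f f' univ E < ⊤ →
      perim f f' univ (ehrhardSymm f v E) ≤ perim f f' univ E

/-- The half-space `H(v, r) = {x : x·v ≥ r}`. -/
def halfSpace {n : ℕ} (v : En n) (r : ℝ) : Set (En n) := {x | r ≤ ⟪x, v⟫}

/-- `H_μ(E, v)`: the largest half-space in direction `v` with `μ`-measure `μ(E)`. -/
def halfSpaceOf {n : ℕ} (f : En n → ℝ) (E : Set (En n)) (v : En n) : Set (En n) :=
  {x | ∀ b : ℝ, (∀ c : ℝ, muM f (halfSpace v c) ≤ muM f E → b ≤ c) → b ≤ ⟪x, v⟫}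

/-- `g'` is the weak derivative of `g : ℝ → ℝ` (so `g ∈ W^{1,1}_loc(ℝ)`). -/
def HasWeakDeriv (g g' : ℝ → ℝ) : Prop :=
  LocallyIntegrable g volume ∧ LocallyIntegrable g' volume ∧
    ∀ φ : ℝ → ℝ, ContDiff ℝ 1 φ → HasCompactSupport φ →
      (∫ t, g t * deriv φ t) = - ∫ t, φ t * g' t

section

variable {ν : Measure ℝ} {m : ℝ≥0∞}

/-- The largest half-line unbounded to the right with `ν`-measure at most `m`, encoded as the set of
starting points of its closed rays, so that no endpoint in `ℝ ∪ {±∞}` has to be named. -/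
def halfLine (ν : Measure ℝ) (m : ℝ≥0∞) : Set ℝ := {t | ν (Ici t) ≤ m}

lemma isUpperSet_halfLine : IsUpperSet (halfLine ν m) := fun _ _ hst hs =>
  (measure_mono (Ici_subset_Ici.2 hst)).trans hs

lemma measurableSet_halfLine : MeasurableSet (halfLine ν m) :=
  isUpperSet_halfLine.ordConnected.measurableSet

lemma exists_gt_lt_measure_Ici [NullSingletonClass ν] {t : ℝ} (ht : m < ν (Ici t)) :
    ∃ s > t, m < ν (Ici s) := by
  obtain ⟨u, hanti, hgt, hlim⟩ := exists_seq_strictAnti_tendsto t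
  have hmono : Monotone fun k => Ici (u k) := fun _ _ hkl =>
    Ici_subset_Ici.2 (hanti.antitone hkl)
  rw [← measure_congr Ioi_ae_eq_Ici, ← iUnion_Ici_eq_Ioi_of_lt_of_tendsto hgt hlim,
    hmono.measure_iUnion, lt_iSup_iff] at ht
  obtain ⟨k, hk⟩ := ht
  exact ⟨u k, hgt k, hk⟩

lemma upperBounds_lowerBounds_halfLine [NullSingletonClass ν] :
    upperBounds (lowerBounds (halfLine ν m)) = halfLine ν m := by
  refine Subset.antisymm (fun t ht => ?_) (subset_upperBounds_lowerBounds _)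
  by_contra hmt
  obtain ⟨s, hts, hms⟩ := exists_gt_lt_measure_Ici (not_le.1 hmt)
  have hs : s ∈ lowerBounds (halfLine ν m) := fun c hc =>
    le_of_not_ge fun hcs => hms.not_ge (isUpperSet_halfLine hcs hc)
  exact hts.not_ge (ht hs)

lemma measure_halfLine_le [IsFiniteMeasure ν] : ν (halfLine ν m) ≤ m := by
  rw [measurableSet_halfLine.measure_eq_iSup_isCompact]
  refine iSup₂_le fun K hK => iSup_le fun hKc => ?_
  rcases K.eq_empty_or_nonempty with rfl | hne
  · simp only [measure_empty, zero_le]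
  · obtain ⟨a, haK, ha⟩ := hKc.exists_isLeast hne
    exact (measure_mono ha).trans (hK haK)

lemma measure_compl_halfLine_le [IsFiniteMeasure ν] [NullSingletonClass ν] :
    ν (halfLine ν m)ᶜ ≤ ν univ - m := by
  rw [measurableSet_halfLine.compl.measure_eq_iSup_isCompact]
  refine iSup₂_le fun K hK => iSup_le fun hKc => ?_
  rcases K.eq_empty_or_nonempty with rfl | hne
  · simp only [measure_empty, zero_le]
  · obtain ⟨a, haK, ha⟩ := hKc.exists_isGreatest hne
    have hma : m ≤ ν (Ici a) := (not_le.1 fun h => hK haK h).le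
    calc ν K ≤ ν (Iic a) := measure_mono ha
      _ = ν (Iio a) := (measure_congr Iio_ae_eq_Iic).symm
      _ = ν univ - ν (Ici a) := by
        rw [← compl_Ici, measure_compl measurableSet_Ici (measure_ne_top _ _)]
      _ ≤ ν univ - m := tsub_le_tsub_left hma _

lemma measure_halfLine [IsFiniteMeasure ν] [NullSingletonClass ν] (hm : m ≤ ν univ) :
    ν (halfLine ν m) = m := by
  refine measure_halfLine_le.antisymm ?_
  calc m = ν univ - (ν univ - m) := (ENNReal.sub_sub_cancel (measure_ne_top _ _) hm).symm
    _ ≤ ν univ - ν (halfLine ν m)ᶜ := tsub_le_tsub_left measure_compl_halfLine_le _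
    _ = ν (halfLine ν m) := by
      rw [measure_compl measurableSet_halfLine (measure_ne_top _ _),
        ENNReal.sub_sub_cancel (measure_ne_top _ _) (measure_mono (subset_univ _))]

end

section

variable {α : Type*} [MeasurableSpace α] {μ : Measure α} [IsFiniteMeasure μ] {A S H : Set α}

lemma measure_sdiff_add_measure_sdiff_le (hA : NullMeasurableSet A μ)
    (hH : NullMeasurableSet H μ) (hHS : H ⊆ S) (hSA : μ S ≤ μ A) :
    μ (S \ H) + μ (H \ A) ≤ μ (A \ H) := by
  refine (ENNReal.add_le_add_iff_left (measure_ne_top μ H)).1 ?_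
  calc μ H + (μ (S \ H) + μ (H \ A)) = μ S + μ (H \ A) := by
        rw [← add_assoc, measure_add_sdiff hH, union_eq_self_of_subset_left hHS]
    _ ≤ μ A + μ (H \ A) := by gcongr
    _ = μ H + μ (A \ H) := by
      rw [measure_add_sdiff hA, measure_add_sdiff hH, union_comm]

lemma measure_sdiff_le_of_nested (hA : NullMeasurableSet A μ) (hH : NullMeasurableSet H μ)
    (hSH : S ⊆ H ∨ H ⊆ S) (hSA : μ S ≤ μ A) : μ (S \ H) ≤ μ (A \ H) := by
  rcases hSH with hSH | hHS
  · simp only [sdiff_eq_empty.2 hSH, measure_empty, zero_le]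
  · exact le_self_add.trans (measure_sdiff_add_measure_sdiff_le hA hH hHS hSA)

lemma measure_sdiff_lt_of_nested (hA : NullMeasurableSet A μ) (hH : NullMeasurableSet H μ)
    (hSH : S ⊆ H ∨ H ⊆ S) (hSA : μ S ≤ μ A) (hAH : μ (A \ H) ≠ 0) (hHA : μ (H \ A) ≠ 0) :
    μ (S \ H) < μ (A \ H) := by
  rcases hSH with hSH | hHS
  · simpa only [sdiff_eq_empty.2 hSH, measure_empty, pos_iff_ne_zero] using hAH
  · exact (ENNReal.lt_add_right (measure_ne_top _ _) hHA).trans_le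
      (measure_sdiff_add_measure_sdiff_le hA hH hHS hSA)

open scoped symmDiff

lemma measure_symmDiff_eq_add_self (hA : NullMeasurableSet A μ) (hH : NullMeasurableSet H μ)
    (h : μ A = μ H) : μ (A ∆ H) = μ (A \ H) + μ (A \ H) := by
  rw [measure_symmDiff_eq hA hH, measure_sdiff_symm hA hH h (measure_ne_top _ _)]

end

section

variable {G : Type*} [AddGroup G] [MeasurableSpace G] [MeasurableAdd₂ G] {ρ : Measure G}
  {g h : G → ℝ≥0∞}

lemma exists_lintegral_mul_comp_add_ne_zero [SFinite ρ] [ρ.IsAddLeftInvariant]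
    (hg : Measurable g) (hh : Measurable h) (hg0 : ∫⁻ x, g x ∂ρ ≠ 0) (hh0 : ∫⁻ x, h x ∂ρ ≠ 0) :
    ∃ z, ∫⁻ x, g x * h (x + z) ∂ρ ≠ 0 := by
  by_contra! hzero
  refine mul_ne_zero hg0 hh0 ?_
  calc (∫⁻ x, g x ∂ρ) * ∫⁻ x, h x ∂ρ = ∫⁻ x, ∫⁻ z, g x * h (x + z) ∂ρ ∂ρ := by
        rw [← lintegral_mul_const _ hg]
        refine lintegral_congr fun x => ?_
        rw [lintegral_const_mul _ (by fun_prop), lintegral_add_left_eq_self]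
    _ = ∫⁻ z, ∫⁻ x, g x * h (x + z) ∂ρ ∂ρ := lintegral_lintegral_swap (by fun_prop)
    _ = 0 := by simp only [hzero, lintegral_zero]

lemma lintegral_ne_zero_of_lintegral_mul_comp_add [ρ.IsAddRightInvariant]
    (hg : Measurable g) (hh : Measurable h) {z : G} (hz : ∫⁻ x, g x * h (x + z) ∂ρ ≠ 0) :
    ∫⁻ x, g x ∂ρ ≠ 0 ∧ ∫⁻ x, h x ∂ρ ≠ 0 := by
  refine ⟨fun hg0 => hz ?_, fun hh0 => hz ?_⟩
  · rw [lintegral_eq_zero_iff hg] at hg0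
    refine lintegral_eq_zero_of_ae_eq_zero (hg0.mono fun x hx => ?_)
    simp only [hx, Pi.zero_apply, zero_mul]
  · rw [← lintegral_add_right_eq_self _ z, lintegral_eq_zero_iff (by fun_prop)] at hh0
    refine lintegral_eq_zero_of_ae_eq_zero (hh0.mono fun x hx => ?_)
    simp only [hx, Pi.zero_apply, mul_zero]

end

section

variable {V : Type*} [AddCommGroup V] [Module ℝ V]

/-- The line through `z` in direction `η`, parametrized so that `z` is at time `0`. -/
def fiberLine (η z : V) (t : ℝ) : V := z + t • η

/-- The measure with density `F` on the line through `z` in direction `η`, pulled back to the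
parameter. -/
def lineMeasure (F : V → ℝ≥0∞) (η z : V) : Measure ℝ := volume.withDensity (F ∘ fiberLine η z)

/-- Ehrhard symmetrization of `E` in direction `η` for the density `F`: the point `z` belongs to it
when the ray from `z` in direction `η` carries at most the mass that `E` has on the line through
`z`. Comparing on the line based at `z` itself makes the projection to `η^⊥` unnecessary. -/
def raySymm (F : V → ℝ≥0∞) (η : V) (E : Set V) : Set V :=
  {z | lineMeasure F η z (Ici 0) ≤ lineMeasure F η z (fiberLine η z ⁻¹' E)}

variable (F : V → ℝ≥0∞) (η z : V) (E : Set V)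

instance : NullSingletonClass (lineMeasure F η z) :=
  inferInstanceAs (NullSingletonClass (volume.withDensity _))

lemma fiberLine_fiberLine (s t : ℝ) : fiberLine η (fiberLine η z s) t = fiberLine η z (t + s) := by
  simp only [fiberLine, add_smul, add_assoc, add_comm (s • η)]

lemma map_add_right_lineMeasure (s : ℝ) :
    (lineMeasure F η (fiberLine η z s)).map (MeasurableEquiv.addRight s) = lineMeasure F η z := by
  ext A hA
  rw [MeasurableEquiv.map_apply, lineMeasure, lineMeasure, withDensity_apply _ hA,
    withDensity_apply _ ((MeasurableEquiv.addRight s).measurable hA)]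
  simp only [Function.comp_apply, fiberLine_fiberLine]
  exact (measurePreserving_add_right volume s).setLIntegral_comp_preimage_emb
    (MeasurableEquiv.addRight s).measurableEmbedding (F ∘ fiberLine η z) A

lemma lineMeasure_fiberLine (s : ℝ) (A : Set ℝ) :
    lineMeasure F η (fiberLine η z s) ((· + s) ⁻¹' A) = lineMeasure F η z A := by
  rw [← map_add_right_lineMeasure F η z s, MeasurableEquiv.map_apply]
  rfl

lemma preimage_fiberLine_raySymm :
    fiberLine η z ⁻¹' raySymm F η E =
      halfLine (lineMeasure F η z) (lineMeasure F η z (fiberLine η z ⁻¹' E)) := by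
  ext t
  have hray : (· + t) ⁻¹' Ici t = Ici (0 : ℝ) := by simp
  have htrace : (· + t) ⁻¹' (fiberLine η z ⁻¹' E) = fiberLine η (fiberLine η z t) ⁻¹' E := by
    ext s
    simp only [mem_preimage, fiberLine_fiberLine]
  simp only [raySymm, halfLine, mem_preimage, mem_ofPred_eq, ← lineMeasure_fiberLine F η z t, hray,
    htrace]

end

section

variable {V : Type*} [AddCommGroup V] [Module ℝ V] [MeasurableSpace V] [MeasurableAdd₂ V]
  [MeasurableSMul₂ ℝ V] {F : V → ℝ≥0∞} {η z : V} {X E : Set V}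

lemma measurable_fiberLine : Measurable (fiberLine η z) := by
  unfold fiberLine; fun_prop

lemma lineMeasure_preimage (hX : MeasurableSet X) :
    lineMeasure F η z (fiberLine η z ⁻¹' X) = ∫⁻ t, X.indicator F (fiberLine η z t) := by
  rw [lineMeasure, withDensity_apply _ (measurable_fiberLine hX),
    ← lintegral_indicator (measurable_fiberLine hX)]
  rfl

lemma measurable_lineMeasure_preimage (hF : Measurable F) (hX : MeasurableSet X) :
    Measurable fun z => lineMeasure F η z (fiberLine η z ⁻¹' X) := by
  simp only [lineMeasure_preimage hX, fiberLine]
  have := hF.indicator hX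
  exact Measurable.lintegral_prod_right' (f := fun p : V × ℝ => X.indicator F (p.1 + p.2 • η))
    (by fun_prop)

lemma measurableSet_raySymm (hF : Measurable F) (hE : MeasurableSet E) :
    MeasurableSet (raySymm F η E) := by
  refine measurableSet_le ?_ (measurable_lineMeasure_preimage hF hE)
  simp only [lineMeasure, withDensity_apply _ measurableSet_Ici, Function.comp_apply, fiberLine]
  exact Measurable.lintegral_prod_right' (f := fun p : V × ℝ => F (p.1 + p.2 • η)) (by fun_prop)

variable {ρ : Measure V} [SFinite ρ] [ρ.IsAddRightInvariant]

lemma ae_ae_fiberLine {P : V → Prop} (hP : ∀ᵐ z ∂ρ, P z) :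
    ∀ᵐ z ∂ρ, ∀ᵐ t : ℝ, P (fiberLine η z t) := by
  obtain ⟨N, hPN, hN, hN0⟩ := exists_measurable_superset_of_null (ae_iff.1 hP)
  have hline : ∀ᵐ z ∂ρ, ∀ᵐ t : ℝ, fiberLine η z t ∉ N := by
    refine (Measure.ae_ae_comm ?_).2 (Eventually.of_forall fun t => ?_)
    · exact hN.compl.preimage (by unfold fiberLine; fun_prop)
    · exact (measurePreserving_add_right ρ (t • η)).quasiMeasurePreserving.ae
        (measure_eq_zero_iff_ae_notMem.1 hN0)
  filter_upwards [hline] with z hz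
  exact hz.mono fun t ht => by_contra fun hPt => ht (hPN hPt)

lemma raySymm_ae_eq {G : V → ℝ≥0∞} {E' : Set V} (hFG : F =ᵐ[ρ] G) (hE : E =ᵐ[ρ] E') :
    raySymm F η E =ᵐ[ρ] raySymm G η E' := by
  filter_upwards [ae_ae_fiberLine (η := η) hFG, ae_ae_fiberLine (η := η) hE] with z hFGz hEz
  have hline : lineMeasure F η z = lineMeasure G η z := withDensity_congr_ae hFGz
  have htrace : lineMeasure G η z (fiberLine η z ⁻¹' E) =
      lineMeasure G η z (fiberLine η z ⁻¹' E') :=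
    measure_congr ((withDensity_absolutelyContinuous _ _).ae_le hEz)
  change (z ∈ raySymm F η E) = (z ∈ raySymm G η E')
  simp only [raySymm, mem_ofPred_eq, hline, htrace]

lemma exists_measurable_raySymm_ae_eq (hF : AEMeasurable F ρ) (hE : NullMeasurableSet E ρ) :
    ∃ F' E', Measurable F' ∧ MeasurableSet E' ∧ ρ.withDensity F = ρ.withDensity F' ∧
      E =ᵐ[ρ.withDensity F'] E' ∧
      ∀ η, raySymm F η E =ᵐ[ρ.withDensity F'] raySymm F' η E' := by
  obtain ⟨F', hF', hFF'⟩ := hF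
  obtain ⟨E', hE', hEE'⟩ := hE
  have hac : ρ.withDensity F' ≪ ρ := withDensity_absolutelyContinuous _ _
  exact ⟨F', E', hF', hE', withDensity_congr_ae hFF', hac.ae_eq hEE',
    fun η => hac.ae_eq (raySymm_ae_eq hFF' hEE')⟩

end

section

variable {V : Type*} [NormedAddCommGroup V] [InnerProductSpace ℝ V]

/-- The slab of width one orthogonal to the unit vector `η`, used as a set of base points for the
lines in direction `η`. -/
def unitSlab (η : V) : Set V := {z | ⟪z, η⟫ ∈ Ico (0 : ℝ) 1}

lemma volume_sub_smul_mem_unitSlab {η : V} (hη : ‖η‖ = 1) (y : V) :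
    volume {t : ℝ | y - t • η ∈ unitSlab η} = 1 := by
  have htimes : {t : ℝ | y - t • η ∈ unitSlab η} = Ioc (⟪y, η⟫ - 1) ⟪y, η⟫ := by
    ext t
    simp only [unitSlab, mem_ofPred_eq, inner_sub_left, real_inner_smul_left,
      real_inner_self_eq_norm_sq, hη, mem_Ico, mem_Ioc]
    constructor <;> rintro ⟨_, _⟩ <;> constructor <;> linarith
  rw [htimes, Real.volume_Ioc, sub_sub_cancel, ENNReal.ofReal_one]

variable [MeasurableSpace V] [BorelSpace V] [SecondCountableTopology V] {ρ : Measure V} [SFinite ρ]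
  [ρ.IsAddRightInvariant] {F g : V → ℝ≥0∞} {η : V} {X E : Set V}

lemma measurableSet_unitSlab : MeasurableSet (unitSlab η) :=
  measurableSet_Ico.preimage (by fun_prop)

lemma setLIntegral_unitSlab_fiberLine (hη : ‖η‖ = 1) (hg : Measurable g) :
    ∫⁻ z in unitSlab η, (∫⁻ t, g (fiberLine η z t)) ∂ρ = ∫⁻ y, g y ∂ρ := by
  have hslab : Measurable ((unitSlab η).indicator (1 : V → ℝ≥0∞)) :=
    measurable_one.indicator measurableSet_unitSlab
  calc ∫⁻ z in unitSlab η, (∫⁻ t, g (fiberLine η z t)) ∂ρ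
      = ∫⁻ z, (∫⁻ t : ℝ, (unitSlab η).indicator 1 z * g (z + t • η)) ∂ρ := by
        rw [← lintegral_indicator measurableSet_unitSlab]
        refine lintegral_congr fun z => ?_
        rw [lintegral_const_mul _ (by fun_prop)]
        by_cases hz : z ∈ unitSlab η <;> simp [hz, fiberLine]
    _ = ∫⁻ t : ℝ, ∫⁻ z, (unitSlab η).indicator 1 z * g (z + t • η) ∂ρ :=
        lintegral_lintegral_swap (by fun_prop)
    _ = ∫⁻ t : ℝ, ∫⁻ y, (unitSlab η).indicator 1 (y - t • η) * g y ∂ρ := by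
        refine lintegral_congr fun t => ?_
        rw [← lintegral_sub_right_eq_self _ (t • η)]
        simp only [sub_add_cancel]
    _ = ∫⁻ y, (∫⁻ t : ℝ, (unitSlab η).indicator 1 (y - t • η) * g y) ∂ρ :=
        lintegral_lintegral_swap (by fun_prop)
    _ = ∫⁻ y, g y ∂ρ := by
        refine lintegral_congr fun y => ?_
        have hmeas : MeasurableSet {t : ℝ | y - t • η ∈ unitSlab η} :=
          measurableSet_unitSlab.preimage (by fun_prop)
        rw [lintegral_mul_const _ (by fun_prop)]
        exact (congrArg (· * g y) ((lintegral_indicator_one hmeas).trans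
          (volume_sub_smul_mem_unitSlab hη y))).trans (one_mul _)

lemma setLIntegral_unitSlab_lineMeasure (hη : ‖η‖ = 1) (hF : Measurable F) (hX : MeasurableSet X) :
    ∫⁻ z in unitSlab η, lineMeasure F η z (fiberLine η z ⁻¹' X) ∂ρ = ρ.withDensity F X := by
  simp only [lineMeasure_preimage hX]
  rw [setLIntegral_unitSlab_fiberLine hη (hF.indicator hX), lintegral_indicator hX,
    withDensity_apply _ hX]

lemma frequently_lineMeasure_ne_zero (hη : ‖η‖ = 1) (hF : Measurable F) {A B : Set V}
    (hA : MeasurableSet A) (hB : MeasurableSet B) {d : ℝ}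
    (hd : ∫⁻ y, A.indicator F y * B.indicator F (y + d • η) ∂ρ ≠ 0) :
    ∃ᵐ z ∂ρ.restrict (unitSlab η), lineMeasure F η z (fiberLine η z ⁻¹' A) ≠ 0 ∧
      lineMeasure F η z (fiberLine η z ⁻¹' B) ≠ 0 := by
  have hFA := hF.indicator hA
  have hFB := hF.indicator hB
  contrapose! hd
  rw [← setLIntegral_unitSlab_fiberLine (ρ := ρ) hη (by fun_prop)]
  refine lintegral_eq_zero_of_ae_eq_zero (hd.mono fun z hz => ?_)
  by_contra hne
  have hprod :
      ∫⁻ t, A.indicator F (fiberLine η z t) * B.indicator F (fiberLine η z (t + d)) ≠ 0 := by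
    simpa only [fiberLine, add_smul, ← add_assoc, Pi.zero_apply] using hne
  obtain ⟨hA0, hB0⟩ := lintegral_ne_zero_of_lintegral_mul_comp_add
    (hFA.comp measurable_fiberLine) (hFB.comp measurable_fiberLine) hprod
  simp only [lineMeasure_preimage hA, lineMeasure_preimage hB] at hz
  exact hB0 (hz hA0)

variable [IsFiniteMeasure (ρ.withDensity F)]

lemma ae_isFiniteMeasure_lineMeasure (hη : ‖η‖ = 1) (hF : Measurable F) :
    ∀ᵐ z ∂ρ.restrict (unitSlab η), IsFiniteMeasure (lineMeasure F η z) := by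
  have hfin : ∫⁻ z in unitSlab η, lineMeasure F η z (fiberLine η z ⁻¹' univ) ∂ρ ≠ ∞ := by
    rw [setLIntegral_unitSlab_lineMeasure hη hF .univ]
    exact measure_ne_top _ _
  filter_upwards [ae_lt_top (measurable_lineMeasure_preimage hF .univ) hfin] with z hz
  exact ⟨hz⟩

lemma withDensity_raySymm (hη : ‖η‖ = 1) (hF : Measurable F) (hE : MeasurableSet E) :
    ρ.withDensity F (raySymm F η E) = ρ.withDensity F E := by
  rw [← setLIntegral_unitSlab_lineMeasure hη hF (measurableSet_raySymm hF hE),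
    ← setLIntegral_unitSlab_lineMeasure hη hF hE]
  refine lintegral_congr_ae ?_
  filter_upwards [ae_isFiniteMeasure_lineMeasure hη hF] with z hz
  rw [preimage_fiberLine_raySymm, measure_halfLine (measure_mono (subset_univ _))]

lemma withDensity_raySymm_sdiff_lt (hη : ‖η‖ = 1) (hF : Measurable F) (hE : MeasurableSet E)
    {H : Set V} (hH : MeasurableSet H) (hup : ∀ z, IsUpperSet (fiberLine η z ⁻¹' H)) {d : ℝ}
    (hd : ∫⁻ y, (E \ H).indicator F y * (H \ E).indicator F (y + d • η) ∂ρ ≠ 0) :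
    ρ.withDensity F (raySymm F η E \ H) < ρ.withDensity F (E \ H) := by
  have hnested : ∀ z, fiberLine η z ⁻¹' raySymm F η E ⊆ fiberLine η z ⁻¹' H ∨
      fiberLine η z ⁻¹' H ⊆ fiberLine η z ⁻¹' raySymm F η E := fun z => by
    rw [preimage_fiberLine_raySymm]
    exact isUpperSet_halfLine.total (hup z)
  have hle : ∀ z, IsFiniteMeasure (lineMeasure F η z) →
      lineMeasure F η z (fiberLine η z ⁻¹' raySymm F η E) ≤
        lineMeasure F η z (fiberLine η z ⁻¹' E) := fun z _ => by
    rw [preimage_fiberLine_raySymm]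
    exact measure_halfLine_le
  have hEm : ∀ z, NullMeasurableSet (fiberLine η z ⁻¹' E) (lineMeasure F η z) := fun z =>
    (measurable_fiberLine hE).nullMeasurableSet
  have hHm : ∀ z, NullMeasurableSet (fiberLine η z ⁻¹' H) (lineMeasure F η z) := fun z =>
    (measurable_fiberLine hH).nullMeasurableSet
  have hSH := (measurableSet_raySymm (η := η) hF hE).diff hH
  have hEH := hE.diff hH
  have hfin := ae_isFiniteMeasure_lineMeasure (ρ := ρ) hη hF
  rw [← setLIntegral_unitSlab_lineMeasure hη hF hSH, ← setLIntegral_unitSlab_lineMeasure hη hF hEH]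
  refine lintegral_strict_mono_of_ae_le_of_frequently_ae_lt
    (measurable_lineMeasure_preimage hF hEH).aemeasurable ?_ ?_ ?_
  · rw [setLIntegral_unitSlab_lineMeasure hη hF hSH]
    exact measure_ne_top _ _
  · filter_upwards [hfin] with z hz
    exact measure_sdiff_le_of_nested (hEm z) (hHm z) (hnested z) (hle z hz)
  · refine ((frequently_lineMeasure_ne_zero hη hF hEH (hH.diff hE) hd).and_eventually hfin).mono ?_
    rintro z ⟨⟨hEHz, hHEz⟩, hz⟩
    exact measure_sdiff_lt_of_nested (hEm z) (hHm z) (hnested z) (hle z hz) hEHz hHEz |>.ne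

end

section

variable {V : Type*} [NormedAddCommGroup V] [InnerProductSpace ℝ V]

lemma isUpperSet_preimage_fiberLine_inner {v η : V} (hvη : 0 < ⟪v, η⟫) {I : Set ℝ}
    (hI : IsUpperSet I) (z : V) : IsUpperSet (fiberLine η z ⁻¹' ((fun x => ⟪x, v⟫) ⁻¹' I)) := by
  intro s t hst hs
  refine hI ?_ hs
  simp only [fiberLine, inner_add_left, real_inner_smul_left, real_inner_comm v η]
  gcongr

variable [MeasurableSpace V] [BorelSpace V] [SecondCountableTopology V] {ρ : Measure V} [SFinite ρ]
  [ρ.IsAddLeftInvariant] {F : V → ℝ≥0∞} {E : Set V} {v : V}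

lemma exists_withDensity_raySymm_sdiff_lt [IsFiniteMeasure (ρ.withDensity F)] (hF : Measurable F)
    (hE : MeasurableSet E) {I : Set ℝ} (hI : IsUpperSet I)
    (hEH : ρ.withDensity F (E \ (fun x => ⟪x, v⟫) ⁻¹' I) ≠ 0)
    (hHE : ρ.withDensity F (((fun x => ⟪x, v⟫) ⁻¹' I) \ E) ≠ 0) :
    ∃ η : V, ‖η‖ = 1 ∧ 0 < ⟪v, η⟫ ∧
      ρ.withDensity F (raySymm F η E \ (fun x => ⟪x, v⟫) ⁻¹' I) <
        ρ.withDensity F (E \ (fun x => ⟪x, v⟫) ⁻¹' I) := by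
  set H : Set V := (fun x => ⟪x, v⟫) ⁻¹' I
  have hH : MeasurableSet H := hI.ordConnected.measurableSet.preimage (by fun_prop)
  rw [withDensity_apply _ (hE.diff hH), ← lintegral_indicator (hE.diff hH)] at hEH
  rw [withDensity_apply _ (hH.diff hE), ← lintegral_indicator (hH.diff hE)] at hHE
  obtain ⟨z, hz⟩ := exists_lintegral_mul_comp_add_ne_zero
    (hF.indicator (hE.diff hH)) (hF.indicator (hH.diff hE)) hEH hHE
  have hzv : 0 < ⟪v, z⟫ := by
    obtain ⟨y, hy⟩ : ∃ y, (E \ H).indicator F y * (H \ E).indicator F (y + z) ≠ 0 := by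
      by_contra! hzero
      simp only [hzero, lintegral_zero, ne_eq, not_true_eq_false] at hz
    have hyH := (mem_of_indicator_ne_zero (left_ne_zero_of_mul hy)).2
    have hyzH := (mem_of_indicator_ne_zero (right_ne_zero_of_mul hy)).1
    by_contra hvz
    refine hyH (hI ?_ hyzH)
    simpa only [inner_add_left, add_le_iff_nonpos_right, real_inner_comm, not_lt] using hvz
  have hz0 : 0 < ‖z‖ := norm_pos_iff.2 fun h => by simp only [h, inner_zero_right, lt_irrefl] at hzv
  have hvη : 0 < ⟪v, ‖z‖⁻¹ • z⟫ := by
    rw [real_inner_smul_right]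
    positivity
  have hη : ‖‖z‖⁻¹ • z‖ = 1 := norm_smul_inv_norm (𝕜 := ℝ) (norm_pos_iff.1 hz0)
  refine ⟨‖z‖⁻¹ • z, hη, hvη, withDensity_raySymm_sdiff_lt (d := ‖z‖) hη hF hE hH
    (isUpperSet_preimage_fiberLine_inner hvη hI) ?_⟩
  rwa [smul_inv_smul₀ hz0.ne']

end

section

variable {V : Type*} [NormedAddCommGroup V] [InnerProductSpace ℝ V] [MeasurableSpace V]

/-- The largest half-space in direction `v` with `μ`-measure at most `m`, as the preimage of a
half-line under `⟪·, v⟫`; this is `H_μ(E, v)` for `m = μ E`. -/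
def massHalfSpace (μ : Measure V) (v : V) (m : ℝ≥0∞) : Set V :=
  (fun x => ⟪x, v⟫) ⁻¹' halfLine (μ.map fun x => ⟪x, v⟫) m

section

variable [BorelSpace V] [SecondCountableTopology V] {μ : Measure V} {v : V} {m : ℝ≥0∞}

lemma measurableSet_massHalfSpace : MeasurableSet (massHalfSpace μ v m) :=
  measurableSet_halfLine.preimage (by fun_prop)

lemma measure_massHalfSpace [IsFiniteMeasure μ]
    [NullSingletonClass (μ.map fun x => ⟪x, v⟫)] (hm : m ≤ μ univ) :
    μ (massHalfSpace μ v m) = m := by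
  have hv : Measurable fun x : V => ⟪x, v⟫ := by fun_prop
  rw [massHalfSpace, ← Measure.map_apply hv measurableSet_halfLine,
    measure_halfLine (by rwa [Measure.map_apply hv .univ])]

end

lemma nullSingletonClass_map_inner [BorelSpace V] [FiniteDimensional ℝ V] {μ ρ : Measure V}
    [ρ.IsAddHaarMeasure] (hμ : μ ≪ ρ) {v : V} (hv : v ≠ 0) :
    NullSingletonClass (μ.map fun x => ⟪x, v⟫) := by
  refine ⟨fun r => ?_⟩
  have hsurj : Function.Surjective (innerₗ V v) :=
    LinearMap.surjective fun h => hv (inner_self_eq_zero.1 (LinearMap.congr_fun h v))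
  have hne : ∀ᵐ x ∂ρ, innerₗ V v x ∈ ({r}ᶜ : Set ℝ) :=
    (ae_comp_linearMap_mem_iff _ ρ volume hsurj (measurableSet_singleton r).compl).2
      (Measure.ae_ne volume r)
  rw [Measure.map_apply (by fun_prop) (measurableSet_singleton r), measure_eq_zero_iff_ae_notMem]
  filter_upwards [hμ.ae_le hne] with x hx
  rwa [mem_preimage, real_inner_comm]

end

open scoped symmDiff

section

variable {V : Type*} [NormedAddCommGroup V] [InnerProductSpace ℝ V]
  [FiniteDimensional ℝ V] [MeasurableSpace V] [BorelSpace V] {ρ : Measure V}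
  [ρ.IsAddHaarMeasure] {F : V → ℝ≥0∞} {E H : Set V} {v : V}

lemma exists_withDensity_raySymm_lt [IsFiniteMeasure (ρ.withDensity F)] (hF : Measurable F)
    (hE : MeasurableSet E) (hv : v ≠ 0)
    (hH : H = massHalfSpace (ρ.withDensity F) v (ρ.withDensity F E))
    (hΔ : ρ.withDensity F (E ∆ H) ≠ 0) :
    ∃ η : V, ‖η‖ = 1 ∧ 0 < ⟪v, η⟫ ∧
      ρ.withDensity F (raySymm F η E \ H) < ρ.withDensity F (E \ H) ∧
      ρ.withDensity F (raySymm F η E ∆ H) < ρ.withDensity F (E ∆ H) := by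
  have hatom := nullSingletonClass_map_inner (withDensity_absolutelyContinuous ρ F) hv
  have hmass : ρ.withDensity F E = ρ.withDensity F H :=
    hH ▸ (measure_massHalfSpace (measure_mono (subset_univ _))).symm
  have hEm : NullMeasurableSet E (ρ.withDensity F) := hE.nullMeasurableSet
  have hHm : NullMeasurableSet H (ρ.withDensity F) :=
    hH ▸ measurableSet_massHalfSpace.nullMeasurableSet
  rw [measure_symmDiff_eq_add_self hEm hHm hmass] at hΔ ⊢
  have hEH : ρ.withDensity F (E \ H) ≠ 0 := fun h0 => hΔ (by rw [h0, add_zero])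
  have hHE : ρ.withDensity F (H \ E) ≠ 0 := by
    rwa [← measure_sdiff_symm hEm hHm hmass (measure_ne_top _ _)]
  obtain ⟨η, hη, hvη, hlt⟩ : ∃ η : V, ‖η‖ = 1 ∧ 0 < ⟪v, η⟫ ∧
      ρ.withDensity F (raySymm F η E \ H) < ρ.withDensity F (E \ H) := by
    subst hH
    exact exists_withDensity_raySymm_sdiff_lt hF hE isUpperSet_halfLine hEH hHE
  refine ⟨η, hη, hvη, hlt, ?_⟩
  rw [measure_symmDiff_eq_add_self (measurableSet_raySymm hF hE).nullMeasurableSet hHm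
    ((withDensity_raySymm hη hF hE).trans hmass)]
  exact ENNReal.add_lt_add hlt hlt

theorem measure_reduction_general (hF : AEMeasurable F ρ) (hfin : ∫⁻ x, F x ∂ρ ≠ ∞)
    (hE : NullMeasurableSet E ρ) (hv : v ≠ 0)
    (hH : H = massHalfSpace (ρ.withDensity F) v (ρ.withDensity F E))
    (hΔ : ρ.withDensity F (E ∆ H) ≠ 0) :
    ∃ η : V, ‖η‖ = 1 ∧ 0 < ⟪v, η⟫ ∧
      ρ.withDensity F (raySymm F η E \ H) < ρ.withDensity F (E \ H) ∧
      ρ.withDensity F (raySymm F η E ∆ H) < ρ.withDensity F (E ∆ H) := by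
  have hfinite : IsFiniteMeasure (ρ.withDensity F) := isFiniteMeasure_withDensity hfin
  obtain ⟨F', E', hF', hE', hμ, hEE', hS⟩ := exists_measurable_raySymm_ae_eq hF hE
  rw [hμ] at hfinite hH hΔ ⊢
  rw [measure_congr hEE'] at hH
  rw [measure_congr (hEE'.symmDiff (ae_eq_refl H))] at hΔ ⊢
  obtain ⟨η, hη, hvη, hlt, hltΔ⟩ := exists_withDensity_raySymm_lt hF' hE' hv hH hΔ
  refine ⟨η, hη, hvη, ?_, ?_⟩
  · rwa [measure_congr ((hS η).diff (ae_eq_refl H)), measure_congr (hEE'.diff (ae_eq_refl H))]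
  · rwa [measure_congr ((hS η).symmDiff (ae_eq_refl H))]

end

section

lemma ehrhard1D_one {ν : Measure ℝ} [NullSingletonClass ν] (A : Set ℝ) :
    ehrhard1D ν 1 A = halfLine ν (ν A) := by
  rw [← upperBounds_lowerBounds_halfLine]
  simp only [ehrhard1D, one_mul]
  rfl

variable {n : ℕ} (f : En n → ℝ) (E : Set (En n))

lemma ehrhardSymm_eq_raySymm (η : En n) :
    ehrhardSymm f η E = raySymm (fun x => ENNReal.ofReal (f x)) η E := by
  ext z
  have hz : fiberLine η (z - ⟪z, η⟫ • η) ⟪z, η⟫ = z := sub_add_cancel _ _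
  have hE : z ∈ ehrhardSymm f η E ↔
      ⟪z, η⟫ ∈ fiberLine η (z - ⟪z, η⟫ • η) ⁻¹' raySymm (fun x => ENNReal.ofReal (f x)) η E := by
    rw [preimage_fiberLine_raySymm, ← ehrhard1D_one]
    rfl
  rw [hE, mem_preimage, hz]

lemma halfSpaceOf_eq_massHalfSpace {v : En n} (hv : v ≠ 0) :
    halfSpaceOf f E v = massHalfSpace (muM f) v (muM f E) := by
  have hatom : NullSingletonClass ((muM f).map fun x => ⟪x, v⟫) :=
    nullSingletonClass_map_inner (withDensity_absolutelyContinuous volume _) hv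
  have hray (c : ℝ) : muM f (halfSpace v c) = (muM f).map (fun x => ⟪x, v⟫) (Ici c) :=
    (Measure.map_apply (f := fun x => ⟪x, v⟫) (by fun_prop) measurableSet_Ici).symm
  rw [massHalfSpace, ← upperBounds_lowerBounds_halfLine]
  simp only [halfSpaceOf, hray]
  rfl

end

/-- **Strict measure reduction.** If `E` differs from `H_μ(E, v)` in positive
`μ`-measure, then some symmetrization in a direction `η` with `v·η > 0` strictly
reduces the mass outside `H_μ(E, v)` (and the symmetric difference). -/
theorem measure_reduction {n : ℕ} (hn : 2 ≤ n) (f : En n → ℝ) (f' : En n → En n)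
    (hW : MemW f f') (hPS : IsPSMeasure f f')
    (E : Set (En n)) (hE : NullMeasurableSet E volume)
    (v : En n) (hv : ‖v‖ = 1)
    (hΔ : 0 < muM f ((E \ halfSpaceOf f E v) ∪ (halfSpaceOf f E v \ E))) :
    ∃ η : En n, ‖η‖ = 1 ∧ (0:ℝ) < ⟪v, η⟫ ∧
      muM f (ehrhardSymm f η E \ halfSpaceOf f E v) < muM f (E \ halfSpaceOf f E v) ∧
      muM f ((ehrhardSymm f η E \ halfSpaceOf f E v) ∪ (halfSpaceOf f E v \ ehrhardSymm f η E))
        < muM f ((E \ halfSpaceOf f E v) ∪ (halfSpaceOf f E v \ E)) := by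
  have hv0 : v ≠ 0 := norm_ne_zero_iff.1 (hv ▸ one_ne_zero)
  simp only [ehrhardSymm_eq_raySymm, ← Set.symmDiff_def] at hΔ ⊢
  exact measure_reduction_general hW.2.1.aestronglyMeasurable.aemeasurable.ennreal_ofReal
    hW.2.1.lintegral_lt_top.ne hE hv0 (halfSpaceOf_eq_massHalfSpace f E hv0) hΔ.ne'

end
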